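/- In the semilinear setting below, let L be a special lattice in V. Then p·Φ_*(L) ⊆ L ∩ Φ_*(L); the lattice Φ_*(L) is self-dual with Q(Φ_*(L)) ⊆ W₀, so Q induces an 𝔽-quadratic form q̄ on the 𝔽-vector space Φ_*(L)/pΦ_*(L); the image H of L ∩ Φ_*(L) in Φ_*(L)/pΦ_*(L) is a hyperplane (a subspace of codimension 1); and the orthogonal complement H^⊥ of H with respect to the bilinear form of q̄ is a 1-dimensional subspace on which q̄ vanishes identically (an isotropic line). -/

import Mathlib

/-!
Statement 11: In the semilinear setting (`W₀ = W(𝔽)`, `K₀ = Frac W₀`, `σ` the automorphism of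
`K₀` induced by the Witt vector Frobenius, `Φ : V → V` a `σ`-semilinear bijection with
`Q (Φ v) = σ (Q v)`), let `L` be a special lattice.  Then `p Φ_* L ⊆ L ∩ Φ_* L`; the lattice
`Φ_* L` is self-dual with `Q (Φ_* L) ⊆ W₀`, so `Q` induces an `𝔽`-quadratic form `q̄` on
`Φ_* L / p Φ_* L`; the image `H` of `L ∩ Φ_* L` in `Φ_* L / p Φ_* L` is a hyperplane; and the
orthogonal complement `H^⊥` of `H` is a 1-dimensional subspace on which `q̄` vanishes
identically (an isotropic line).
-/

open QuadraticMap

variable (p : ℕ) [Fact p.Prime] (𝔽 : Type*) [Field 𝔽] [CharP 𝔽 p] [IsAlgClosed 𝔽]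
variable {V : Type*} [AddCommGroup V]
  [Module (FractionRing (WittVector p 𝔽)) V]
  [Module (WittVector p 𝔽) V]
  [IsScalarTower (WittVector p 𝔽) (FractionRing (WittVector p 𝔽)) V]

/-- `L` is a `W₀`-lattice in the `K₀`-vector space `V`:
a finitely generated `W₀`-submodule spanning `V` over `K₀`. -/
def IsLattice (L : Submodule (WittVector p 𝔽) V) : Prop :=
  L.FG ∧ Submodule.span (FractionRing (WittVector p 𝔽)) (L : Set V) = ⊤

/-- The dual lattice `L^∨ = {x ∈ V : [x, y] ∈ W₀ for all y ∈ L}` with respect to the bilinear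
form `[x, y] = Q (x + y) - Q x - Q y` associated to `Q`. -/
noncomputable def dualLattice (Q : QuadraticForm (FractionRing (WittVector p 𝔽)) V)
    (L : Submodule (WittVector p 𝔽) V) : Submodule (WittVector p 𝔽) V :=
  LinearMap.BilinForm.dualSubmodule (QuadraticMap.polarBilin Q) L

/-- `Φ_* L`: the `W₀`-span of the image of `L` under `Φ`. -/
noncomputable def phiStar (Φ : V ≃+ V) (L : Submodule (WittVector p 𝔽) V) :
    Submodule (WittVector p 𝔽) V :=
  Submodule.span (WittVector p 𝔽) (⇑Φ '' (L : Set V))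

/-- `L` is a special lattice: a self-dual lattice such that `(L + Φ_* L)/L` has length 1. -/
noncomputable def IsSpecialLattice (Q : QuadraticForm (FractionRing (WittVector p 𝔽)) V)
    (Φ : V ≃+ V) (L : Submodule (WittVector p 𝔽) V) : Prop :=
  IsLattice p 𝔽 L ∧ dualLattice p 𝔽 Q L = L ∧ L ⋖ (L ⊔ phiStar p 𝔽 Φ L)

/-- `z` lies in `p W₀ ⊆ K₀`, i.e. `z ≡ 0 (mod p)`. -/
def MemPW (z : FractionRing (WittVector p 𝔽)) : Prop :=
  ∃ c : WittVector p 𝔽,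
    z = (p : FractionRing (WittVector p 𝔽)) * algebraMap (WittVector p 𝔽) _ c

/-!
Write `N = Φ_* L`, again self-dual because `Φ` carries the pairing to its `σ`-transform. A simple
module over a local ring is killed by the maximal ideal, so `p N ⊆ L`, and dually `p L ⊆ N`.
By modularity `L ∩ N` is maximal in `N`. A vector `x` is orthogonal to `L ∩ N` modulo `p`
exactly when `p⁻¹ x` lies in the dual of `L ∩ N`, and this dual is `N + W₀ z` for any `z ∈ L`
outside `N`. Hence `H^⊥` is the line spanned by `p z`, and it is isotropic because
`Q (p z) = p² Q z` with `Q z` integral.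
-/

open IsLocalRing LinearMap.BilinForm
open LinearMap (BilinForm)
open scoped Pointwise

theorem sup_span_singleton_eq_of_covBy {R M : Type*} [Ring R] [AddCommGroup M] [Module R M]
    {L N : Submodule R M} (h : L ⋖ N) {x : M} (hxN : x ∈ N) (hxL : x ∉ L) :
    L ⊔ Submodule.span R {x} = N := by
  have hle : L ⊔ Submodule.span R {x} ≤ N :=
    sup_le h.le ((Submodule.span_singleton_le_iff_mem x N).2 hxN)
  refine (h.eq_or_eq le_sup_left hle).resolve_left fun heq ↦ hxL ?_
  exact (Submodule.span_singleton_le_iff_mem x L).1 (sup_eq_left.1 heq)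

theorem smul_mem_of_covBy_of_mem_maximalIdeal {R M : Type*} [CommRing R] [IsLocalRing R]
    [AddCommGroup M] [Module R M] {L N : Submodule R M} (h : L ⋖ N) {r : R}
    (hr : r ∈ maximalIdeal R) {x : M} (hx : x ∈ N) : r • x ∈ L := by
  have : IsSimpleModule R (N ⧸ L.comap N.subtype) := (covBy_iff_quot_is_simple h.le).1 h
  rw [← eq_maximalIdeal (IsSimpleModule.annihilator_isMaximal (M := N ⧸ L.comap N.subtype)),
    Module.mem_annihilator] at hr
  have hmk : Submodule.Quotient.mk (p := L.comap N.subtype) (r • ⟨x, hx⟩) = 0 :=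
    hr (Submodule.Quotient.mk ⟨x, hx⟩)
  exact (Submodule.Quotient.mk_eq_zero (L.comap N.subtype)).1 hmk

section DualSubmodule

variable {R K E : Type*} [CommRing R] [Field K] [Algebra R K] [AddCommGroup E]
  [Module R E] [Module K E] [IsScalarTower R K E] (B : BilinForm K E) {L N : Submodule R E}

theorem bilin_smul_left (r : R) (x y : E) : B (r • x) y = r • B x y := by
  rw [LinearMap.map_smul_of_tower, LinearMap.smul_apply]

theorem dualSubmodule_anti (h : L ≤ N) : B.dualSubmodule N ≤ B.dualSubmodule L :=
  fun _ hx y hy ↦ hx y (h hy)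

theorem mem_dualSubmodule_sup_span_singleton {e x : E} :
    x ∈ B.dualSubmodule (L ⊔ Submodule.span R {e}) ↔
      x ∈ B.dualSubmodule L ∧ B x e ∈ (1 : Submodule R K) := by
  refine ⟨fun hx ↦ ⟨dualSubmodule_anti B le_sup_left hx,
    hx e (Submodule.mem_sup_right (Submodule.mem_span_singleton_self e))⟩, ?_⟩
  rintro ⟨hxL, hxe⟩ y hy
  obtain ⟨l, hl, _, ht, rfl⟩ := Submodule.mem_sup.1 hy
  obtain ⟨c, rfl⟩ := Submodule.mem_span_singleton.1 ht
  rw [map_add, LinearMap.map_smul_of_tower]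
  exact add_mem (hxL l hl) (Submodule.smul_mem _ c hxe)

theorem smul_mem_dualSubmodule {r : R} (h : ∀ y ∈ N, r • y ∈ L) {x : E}
    (hx : x ∈ B.dualSubmodule L) : r • x ∈ B.dualSubmodule N := by
  intro y hy
  rw [bilin_smul_left, ← LinearMap.map_smul_of_tower]
  exact hx (r • y) (h y hy)

theorem eq_of_le_of_dualSubmodule_eq_self (hL : B.dualSubmodule L = L)
    (hN : B.dualSubmodule N = N) (h : L ≤ N) : L = N :=
  h.antisymm <| by simpa only [hL, hN] using dualSubmodule_anti B h

theorem smul_mem_smul_iff_of_algebraMap_ne_zero {π : R} (hπ : algebraMap R K π ≠ 0) {x : E} :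
    π • x ∈ π • L ↔ x ∈ L := by
  refine ⟨fun h ↦ ?_, Submodule.smul_mem_pointwise_smul x π L⟩
  obtain ⟨y, hy, hyx⟩ := (Submodule.mem_smul_pointwise_iff_exists _ _ _).1 h
  rw [← algebraMap_smul K π y, ← algebraMap_smul K π x] at hyx
  exact smul_right_injective E hπ hyx ▸ hy

theorem mem_smul_dualSubmodule_iff {π : R} (hπ : algebraMap R K π ≠ 0) {x : E} :
    x ∈ π • B.dualSubmodule L ↔ ∀ y ∈ L, B x y ∈ π • (1 : Submodule R K) := by
  obtain ⟨v, rfl⟩ : ∃ v : E, π • v = x :=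
    ⟨(algebraMap R K π)⁻¹ • x, by rw [← algebraMap_smul K π, smul_inv_smul₀ hπ]⟩
  simp only [smul_mem_smul_iff_of_algebraMap_ne_zero hπ, bilin_smul_left, mem_dualSubmodule]

theorem mem_of_covBy_of_apply_mem_one (hN : B.dualSubmodule N ≤ N) (hcov : L ⋖ N) {e x : E}
    (heN : e ∈ N) (heL : e ∉ L) (hx : x ∈ B.dualSubmodule L)
    (hxe : B x e ∈ (1 : Submodule R K)) : x ∈ N := hN <| by
  rw [← sup_span_singleton_eq_of_covBy hcov heN heL]
  exact (mem_dualSubmodule_sup_span_singleton B).2 ⟨hx, hxe⟩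

section LocalRing

variable [IsLocalRing R] {π : R}

theorem exists_algebraMap_eq_smul_apply (hπ : π ∈ maximalIdeal R) (hcov : L ⋖ N)
    {e x : E} (heN : e ∈ N) (hx : x ∈ B.dualSubmodule L) :
    ∃ r : R, algebraMap R K r = π • B x e := by
  rw [← LinearMap.map_smul_of_tower]
  exact Submodule.mem_one.1 <| hx _ (smul_mem_of_covBy_of_mem_maximalIdeal hcov hπ heN)

theorem exists_unit_algebraMap_eq_smul_apply (hmax : maximalIdeal R = Ideal.span {π})
    (hπ : algebraMap R K π ≠ 0) (hN : B.dualSubmodule N ≤ N) (hcov : L ⋖ N) {e z : E}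
    (heN : e ∈ N) (heL : e ∉ L) (hz : z ∈ B.dualSubmodule L) (hzN : z ∉ N) :
    ∃ u : Rˣ, algebraMap R K u = π • B z e := by
  have hπmem : π ∈ maximalIdeal R := hmax ▸ Ideal.mem_span_singleton_self π
  obtain ⟨u, hu⟩ := exists_algebraMap_eq_smul_apply B hπmem hcov heN hz
  by_cases hunit : IsUnit u
  · exact ⟨hunit.unit, hu⟩
  · obtain ⟨d, rfl⟩ := Ideal.mem_span_singleton.1 (hmax ▸ (mem_maximalIdeal u).2 hunit)
    rw [map_mul, Algebra.smul_def] at hu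
    exact absurd (mem_of_covBy_of_apply_mem_one B hN hcov heN heL hz
      (Submodule.mem_one.2 ⟨d, mul_left_cancel₀ hπ hu⟩)) hzN

-- For `e ∈ N` outside `L`, subtracting a multiple of `z` from a vector of the dual of `L` makes
-- its pairing with `e` vanish, because `π • B z e` is a unit.
theorem dualSubmodule_le_sup_span_singleton (hmax : maximalIdeal R = Ideal.span {π})
    (hπ : algebraMap R K π ≠ 0) (hN : B.dualSubmodule N ≤ N) (hcov : L ⋖ N)
    {z : E} (hz : z ∈ B.dualSubmodule L) (hzN : z ∉ N) :
    B.dualSubmodule L ≤ N ⊔ Submodule.span R {z} := by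
  obtain ⟨e, heN, heL⟩ := SetLike.exists_of_lt hcov.lt
  obtain ⟨u, hu⟩ := exists_unit_algebraMap_eq_smul_apply B hmax hπ hN hcov heN heL hz hzN
  have hπmem : π ∈ maximalIdeal R := hmax ▸ Ideal.mem_span_singleton_self π
  intro v hv
  obtain ⟨b, hb⟩ := exists_algebraMap_eq_smul_apply B hπmem hcov heN hv
  set c : R := b * ↑u⁻¹
  have hpair : B (v - c • z) e = 0 := by
    have hcu : c * u = b := u.inv_mul_cancel_right b
    rw [Algebra.smul_def] at hu hb
    rw [map_sub, LinearMap.sub_apply, bilin_smul_left, Algebra.smul_def, sub_eq_zero]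
    apply mul_left_cancel₀ hπ
    rw [← hb, mul_left_comm, ← hu, ← map_mul, hcu]
  have hvN : v - c • z ∈ N := mem_of_covBy_of_apply_mem_one B hN hcov heN heL
    (sub_mem hv (Submodule.smul_mem _ c hz)) (hpair ▸ zero_mem _)
  rw [← sub_add_cancel v (c • z)]
  exact Submodule.add_mem_sup hvN (Submodule.mem_span_singleton.2 ⟨c, rfl⟩)

end LocalRing

end DualSubmodule

section Semilinear

variable {R R' K K' E E' : Type*} [CommRing R] [CommRing R'] [Field K] [Field K']
  [Algebra R K] [Algebra R' K'] [AddCommGroup E] [AddCommGroup E']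
  [Module R E] [Module K E] [IsScalarTower R K E]
  [Module R' E'] [Module K' E'] [IsScalarTower R' K' E']
  {σ : R →+* R'} [RingHomSurjective σ] {τ : K →+* K'}

theorem map_mem_one_iff (hτ : ∀ r, τ (algebraMap R K r) = algebraMap R' K' (σ r)) {z : K} :
    τ z ∈ (1 : Submodule R' K') ↔ z ∈ (1 : Submodule R K) := by
  simp only [Submodule.mem_one, σ.surjective.exists, ← hτ, τ.injective.eq_iff]

theorem dualSubmodule_map (hτ : ∀ r, τ (algebraMap R K r) = algebraMap R' K' (σ r))
    {B : BilinForm K E} {B' : BilinForm K' E'} {f : E →ₛₗ[σ] E'} (hf : Function.Bijective f)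
    (hB : ∀ x y, B' (f x) (f y) = τ (B x y)) (L : Submodule R E) :
    B'.dualSubmodule (L.map f) = (B.dualSubmodule L).map f := by
  ext v
  obtain ⟨x, rfl⟩ := hf.surjective v
  have hx : f x ∈ B'.dualSubmodule (L.map f) ↔ x ∈ B.dualSubmodule L := by
    simp only [mem_dualSubmodule, Submodule.mem_map, forall_exists_index, and_imp,
      forall_apply_eq_imp_iff₂, hB, map_mem_one_iff hτ]
  rw [hx, ← SetLike.mem_coe, ← SetLike.mem_coe, Submodule.map_coe, hf.injective.mem_set_image]

end Semilinear

section QuadraticForm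

variable {R K E : Type*} [CommRing R] [Field K] [Algebra R K] [AddCommGroup E]
  [Module R E] [Module K E] [IsScalarTower R K E] {Q : QuadraticForm K E} {L N : Submodule R E}

theorem map_mem_one_of_le_dualSubmodule (h2 : IsUnit (2 : R))
    (hN : N ≤ dualSubmodule (polarBilin Q) N) {x : E} (hx : x ∈ N) :
    Q x ∈ (1 : Submodule R K) := by
  obtain ⟨u, hu⟩ := h2
  have hpolar : Q.polarBilin x x = u • Q x := by
    rw [polarBilin_apply_apply, polar_self, Units.smul_def, hu, two_nsmul, two_smul]
  rw [← inv_smul_smul u (Q x), ← hpolar]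
  exact Submodule.smul_mem _ (↑u⁻¹ : R) (hN hx x hx)

theorem map_sub_map_mem_smul_one (h2 : IsUnit (2 : R))
    (hN : N ≤ dualSubmodule (polarBilin Q) N) {π : R} {x y : E} (hy : y ∈ N)
    (hxy : x - y ∈ π • N) : Q x - Q y ∈ π • (1 : Submodule R K) := by
  obtain ⟨w, hw, hwxy⟩ := (Submodule.mem_smul_pointwise_iff_exists _ _ _).1 hxy
  have hQ : Q x - Q y = π • (π • Q w + Q.polarBilin y w) := by
    rw [← sub_add_cancel x y, ← hwxy, add_comm, QuadraticMap.map_add Q, polar_smul_right_of_tower,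
      QuadraticMap.map_smul_of_tower, polarBilin_apply_apply, mul_smul, smul_add]
    abel
  rw [hQ]
  exact Submodule.smul_mem_pointwise_smul _ _ _ <|
    add_mem (Submodule.smul_mem _ π (map_mem_one_of_le_dualSubmodule h2 hN hw)) (hN hy w hw)

theorem map_mem_smul_one_of_mem_smul_sup (h2 : IsUnit (2 : R))
    (hL : L ≤ dualSubmodule (polarBilin Q) L) (hN : N ≤ dualSubmodule (polarBilin Q) N) {π : R}
    (hπL : ∀ l ∈ L, π • l ∈ N) {x : E} (hx : x ∈ π • (N ⊔ L)) :
    Q x ∈ π • (1 : Submodule R K) := by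
  obtain ⟨v, hv, rfl⟩ := (Submodule.mem_smul_pointwise_iff_exists _ _ _).1 hx
  obtain ⟨n, hn, l, hl, rfl⟩ := Submodule.mem_sup.1 hv
  have hdiff : Q (π • (n + l)) - Q (π • l) ∈ π • (1 : Submodule R K) := by
    refine map_sub_map_mem_smul_one h2 hN (hπL l hl) ?_
    rw [smul_add, add_sub_cancel_right]
    exact Submodule.smul_mem_pointwise_smul n π N hn
  have hl' : Q (π • l) ∈ π • (1 : Submodule R K) := by
    rw [QuadraticMap.map_smul_of_tower, mul_smul]
    exact Submodule.smul_mem_pointwise_smul _ _ _ <|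
      Submodule.smul_mem _ π (map_mem_one_of_le_dualSubmodule h2 hL hl)
  rw [← sub_add_cancel (Q (π • (n + l))) (Q (π • l))]
  exact add_mem hdiff hl'

end QuadraticForm

section SelfDualPair

variable {R K E : Type*} [CommRing R] [IsLocalRing R] [Field K] [Algebra R K] [AddCommGroup E]
  [Module R E] [Module K E] [IsScalarTower R K E] {Q : QuadraticForm K E} {L N : Submodule R E}
  {π : R}

theorem exists_isotropic_generator_of_covBy_sup (hmax : maximalIdeal R = Ideal.span {π})
    (hπ : algebraMap R K π ≠ 0) (h2 : IsUnit (2 : R))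
    (hL : dualSubmodule (polarBilin Q) L = L) (hN : dualSubmodule (polarBilin Q) N = N)
    (hcov : L ⋖ L ⊔ N) :
    ∃ x₀ ∈ N, (∀ y ∈ L ⊓ N, polar Q x₀ y ∈ π • (1 : Submodule R K)) ∧ x₀ ∉ π • N ∧
      ∀ x ∈ N, (∀ y ∈ L ⊓ N, polar Q x y ∈ π • (1 : Submodule R K)) →
        (∃ c : R, x - c • x₀ ∈ π • N) ∧ Q x ∈ π • (1 : Submodule R K) := by
  have hπN : ∀ n ∈ N, π • n ∈ L := fun n hn ↦ smul_mem_of_covBy_of_mem_maximalIdeal hcov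
    (hmax ▸ Ideal.mem_span_singleton_self π) (Submodule.mem_sup_right hn)
  have hπL : ∀ l ∈ L, π • l ∈ N := fun l hl ↦
    hN ▸ smul_mem_dualSubmodule (polarBilin Q) hπN (hL.ge hl)
  obtain ⟨z, hzL, hzN⟩ : ∃ z ∈ L, z ∉ N := by
    refine SetLike.not_le_iff_exists.1 fun hle ↦ hcov.lt.ne ?_
    rw [eq_of_le_of_dualSubmodule_eq_self _ hL hN hle, sup_idem]
  have orthogonal_iff (x : E) : (∀ y ∈ L ⊓ N, polar Q x y ∈ π • (1 : Submodule R K)) ↔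
      x ∈ π • dualSubmodule (polarBilin Q) (L ⊓ N) :=
    (mem_smul_dualSubmodule_iff (polarBilin Q) hπ).symm
  have hz : z ∈ dualSubmodule (polarBilin Q) (L ⊓ N) :=
    dualSubmodule_anti _ inf_le_left (hL.ge hzL)
  refine ⟨π • z, hπL z hzL, ?_, ?_, fun x _ hx ↦ ?_⟩
  · exact (orthogonal_iff _).2 (Submodule.smul_mem_pointwise_smul _ _ _ hz)
  · rwa [smul_mem_smul_iff_of_algebraMap_ne_zero hπ]
  · rw [orthogonal_iff, Submodule.mem_smul_pointwise_iff_exists] at hx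
    obtain ⟨v, hv, rfl⟩ := hx
    have hvz : v ∈ N ⊔ Submodule.span R {z} :=
      dualSubmodule_le_sup_span_singleton _ hmax hπ hN.le
        (IsLowerModularLattice.inf_covBy_of_covBy_sup hcov) hz hzN hv
    obtain ⟨n, hn, _, ht, rfl⟩ := Submodule.mem_sup.1 hvz
    obtain ⟨c, rfl⟩ := Submodule.mem_span_singleton.1 ht
    refine ⟨⟨c, ?_⟩, map_mem_smul_one_of_mem_smul_sup h2 hL.ge hN.ge hπL <|
      Submodule.smul_mem_pointwise_smul _ _ _ <| Submodule.add_mem_sup hn (L.smul_mem c hzL)⟩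
    rw [smul_add, smul_comm π c z, add_sub_cancel_right]
    exact Submodule.smul_mem_pointwise_smul n π N hn

theorem statement_11_general (hmax : maximalIdeal R = Ideal.span {π})
    (hπ : algebraMap R K π ≠ 0) (h2 : IsUnit (2 : R))
    {σ : R →+* R} [RingHomSurjective σ] {τ : K →+* K}
    (hτ : ∀ r, τ (algebraMap R K r) = algebraMap R K (σ r))
    {Φ : E →ₛₗ[σ] E} (hΦ : Function.Bijective Φ) (hΦQ : ∀ v, Q (Φ v) = τ (Q v))
    (hL : dualSubmodule (polarBilin Q) L = L) (hN : N = L.map Φ) (hcov : L ⋖ L ⊔ N) :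
    (∀ x ∈ N, π • x ∈ L ⊓ N) ∧
    dualSubmodule (polarBilin Q) N = N ∧
    (∀ x ∈ N, Q x ∈ (1 : Submodule R K)) ∧
    (∀ x ∈ N, ∀ y ∈ N, x - y ∈ π • N → Q x - Q y ∈ π • (1 : Submodule R K)) ∧
    L ⊓ N ⊔ π • N ⋖ N ∧
    ∃ x₀ ∈ N, (∀ y ∈ L ⊓ N ⊔ π • N, polar Q x₀ y ∈ π • (1 : Submodule R K)) ∧ x₀ ∉ π • N ∧
      ∀ x ∈ N, (∀ y ∈ L ⊓ N ⊔ π • N, polar Q x y ∈ π • (1 : Submodule R K)) →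
        (∃ c : R, x - c • x₀ ∈ π • N) ∧ Q x ∈ π • (1 : Submodule R K) := by
  have hπN : ∀ x ∈ N, π • x ∈ L ⊓ N := fun x hx ↦
    ⟨smul_mem_of_covBy_of_mem_maximalIdeal hcov (hmax ▸ Ideal.mem_span_singleton_self π)
      (Submodule.mem_sup_right hx), N.smul_mem π hx⟩
  have hpolar (x y : E) : polarBilin Q (Φ x) (Φ y) = τ (polarBilin Q x y) := by
    simp only [polarBilin_apply_apply, polar, ← map_add, hΦQ, map_sub]
  have hNdual : dualSubmodule (polarBilin Q) N = N := by
    rw [hN, dualSubmodule_map hτ hΦ hpolar, hL]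
  have hH : L ⊓ N ⊔ π • N = L ⊓ N := by
    refine sup_eq_left.2 fun x hx ↦ ?_
    obtain ⟨w, hw, rfl⟩ := (Submodule.mem_smul_pointwise_iff_exists _ _ _).1 hx
    exact hπN w hw
  rw [hH]
  exact ⟨hπN, hNdual, fun x ↦ map_mem_one_of_le_dualSubmodule h2 hNdual.ge,
    fun x _ y hy ↦ map_sub_map_mem_smul_one h2 hNdual.ge hy,
    IsLowerModularLattice.inf_covBy_of_covBy_sup hcov,
    exists_isotropic_generator_of_covBy_sup hmax hπ h2 hL hNdual hcov⟩

end SelfDualPair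

section WittVectors

variable {p : ℕ} [Fact p.Prime] {k : Type*} [Field k]

theorem isUnit_two_wittVector [CharP k p] (hp : p ≠ 2) : IsUnit (2 : WittVector p k) := by
  have h2 : (2 : k) ≠ 0 := Ring.two_ne_zero (ringChar.eq k p ▸ hp)
  refine WittVector.isUnit_of_coeff_zero_ne_zero _ ?_
  rwa [← WittVector.constantCoeff_apply, map_ofNat]

theorem memPW_iff_mem_smul_one {z : FractionRing (WittVector p k)} :
    MemPW p k z ↔
      z ∈ (p : WittVector p k) • (1 : Submodule (WittVector p k) (FractionRing _)) := by
  simp [MemPW, Submodule.mem_smul_pointwise_iff_exists, Algebra.smul_def, eq_comm]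

variable [CharP k p] [PerfectRing k p]

theorem fractionRing_frobenius_algebraMap (r : WittVector p k) :
    WittVector.FractionRing.frobenius p k (algebraMap _ _ r) =
      algebraMap _ (FractionRing _) (WittVector.frobeniusEquiv p k r) :=
  IsFractionRing.ringEquivOfRingEquiv_algebraMap _ r

variable {E : Type*} [AddCommGroup E] [Module (FractionRing (WittVector p k)) E]
  [Module (WittVector p k) E] [IsScalarTower (WittVector p k) (FractionRing (WittVector p k)) E]

/-- A Frobenius-semilinear bijection `Φ` of a vector space over `Frac W(k)`, with its scalars
restricted to `W(k)`. It makes `Φ_* L` an instance of `Submodule.map`. -/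
def frobeniusSemilinearMap (Φ : E ≃+ E)
    (hΦ : ∀ (a : FractionRing (WittVector p k)) (v : E),
      Φ (a • v) = WittVector.FractionRing.frobenius p k a • Φ v) :
    E →ₛₗ[(WittVector.frobeniusEquiv p k : WittVector p k →+* WittVector p k)] E where
  __ := Φ
  map_smul' r v := by
    simpa [fractionRing_frobenius_algebraMap] using hΦ (algebraMap _ _ r) v

theorem phiStar_eq_map (Φ : E ≃+ E)
    (hΦ : ∀ (a : FractionRing (WittVector p k)) (v : E),
      Φ (a • v) = WittVector.FractionRing.frobenius p k a • Φ v)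
    (L : Submodule (WittVector p k) E) :
    phiStar p k Φ L = L.map (frobeniusSemilinearMap Φ hΦ) :=
  (Submodule.span_image (frobeniusSemilinearMap Φ hΦ)).trans <| by rw [Submodule.span_eq]

end WittVectors

theorem statement_11 (hp : p ≠ 2) [FiniteDimensional (FractionRing (WittVector p 𝔽)) V]
    (Q : QuadraticForm (FractionRing (WittVector p 𝔽)) V)
    (hQ : LinearMap.SeparatingLeft (QuadraticMap.polarBilin Q))
    (Φ : V ≃+ V)
    (hΦsemi : ∀ (a : FractionRing (WittVector p 𝔽)) (v : V),
      Φ (a • v) = WittVector.FractionRing.frobenius p 𝔽 a • Φ v)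
    (hΦQ : ∀ v : V, Q (Φ v) = WittVector.FractionRing.frobenius p 𝔽 (Q v))
    (L : Submodule (WittVector p 𝔽) V) (hL : IsSpecialLattice p 𝔽 Q Φ L)
    -- abbreviations: `N = Φ_* L`, `pN = p ⬝ N`, and `H'` the preimage in `N` of the image `H`
    -- of `L ∩ Φ_* L` in `N/pN`
    (N : Submodule (WittVector p 𝔽) V) (hN : N = phiStar p 𝔽 Φ L)
    (pN : Submodule (WittVector p 𝔽) V)
    (hpN : pN = N.map ((p : WittVector p 𝔽) • (LinearMap.id : V →ₗ[WittVector p 𝔽] V)))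
    (H' : Submodule (WittVector p 𝔽) V) (hH' : H' = (L ⊓ N) ⊔ pN) :
    -- `p Φ_* L ⊆ L ∩ Φ_* L`
    (∀ x ∈ N, (p : WittVector p 𝔽) • x ∈ L ⊓ N) ∧
    -- `Φ_* L` is self-dual and `Q` is `W₀`-valued on it ...
    dualLattice p 𝔽 Q N = N ∧
    (∀ x ∈ N, Q x ∈ (1 : Submodule (WittVector p 𝔽) (FractionRing (WittVector p 𝔽)))) ∧
    (∀ x ∈ N, ∀ y ∈ N, x - y ∈ pN → MemPW p 𝔽 (Q x - Q y)) ∧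
    -- the image `H` of `L ∩ Φ_* L` in `N/pN` is a hyperplane (codimension 1) ...
    H' ⋖ N ∧
    -- ... and `H^⊥` is a 1-dimensional subspace of `N/pN` on which `q̄` vanishes identically
    (∃ x₀ ∈ N, (∀ y ∈ H', MemPW p 𝔽 (QuadraticMap.polar Q x₀ y)) ∧ x₀ ∉ pN ∧
      ∀ x ∈ N, (∀ y ∈ H', MemPW p 𝔽 (QuadraticMap.polar Q x y)) →
        ((∃ c : WittVector p 𝔽, x - c • x₀ ∈ pN) ∧ MemPW p 𝔽 (Q x))) := by
  obtain ⟨-, hLdual, hcov⟩ := hL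
  subst hpN hH'
  simp only [memPW_iff_mem_smul_one]
  exact statement_11_general (WittVector.irreducible p).maximalIdeal_eq
    (IsFractionRing.to_map_eq_zero_iff.not.2 (WittVector.irreducible p).ne_zero)
    (isUnit_two_wittVector hp)
    (τ := WittVector.FractionRing.frobenius p 𝔽) fractionRing_frobenius_algebraMap
    (Φ := frobeniusSemilinearMap Φ hΦsemi) Φ.bijective hΦQ hLdual
    (hN.trans (phiStar_eq_map Φ hΦsemi L)) (hN ▸ hcov)
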